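/- Let ρ = exp(−H₀) and σ = ρ_X = exp(−(H₀+X)) be finite faithful weights on a separable Hilbert space H with X bounded and σ nearby ρ. Then both relative entropies S(ρ|σ) = Tr ρ(log ρ − log σ) and S(σ|ρ) = Tr σ(log σ − log ρ) are finite, and their sum satisfies the identity S(ρ|σ) + S(σ|ρ) = Tr{(ρ − σ)X}. -/

import Mathlib

open scoped InnerProductSpace ENNReal NNReal
open MeasureTheory Metric Filter

noncomputable section

variable {H : Type*} [NormedAddCommGroup H] [InnerProductSpace ℂ H] [CompleteSpace H]
  [TopologicalSpace.SeparableSpace H]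

/-- The real power `ρ ^ t` (for `t ≥ 0`) of a positive operator `ρ`, via the continuous
functional calculus. -/
def opow (ρ : H →L[ℂ] H) (t : ℝ) : H →L[ℂ] H := cfc (fun x : ℝ => x ^ t) ρ

/-- The (real) trace of an operator, computed along the Hilbert basis `b`. -/
def trElem {ι : Type*} (b : HilbertBasis ι ℂ H) (T : H →L[ℂ] H) : ℝ :=
  ∑' i, (⟪b i, T (b i)⟫_ℂ).re

/-- `ρ` is a finite faithful weight: a positive, injective, trace-class operator
(trace-class being witnessed by summability of the diagonal in the Hilbert basis `b`). -/
def IsFiniteWeight {ι : Type*} (b : HilbertBasis ι ℂ H) (ρ : H →L[ℂ] H) : Prop :=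
  0 ≤ ρ ∧ Function.Injective (⇑ρ) ∧ Summable (fun i => (⟪b i, ρ (b i)⟫_ℂ).re)

/-- `σ` is nearby `ρ`: there is `C > 1` with `C⁻¹ ρ ≤ σ ≤ C ρ` in the Loewner order. -/
def IsNearby (σ ρ : H →L[ℂ] H) : Prop :=
  ∃ C : ℝ, 1 < C ∧ C⁻¹ • ρ ≤ σ ∧ σ ≤ C • ρ

/-- `F` is the Araki family `t ↦ ρ^t X ρ^{-t}` of `X` relative to `ρ`: a bounded holomorphic
`B(H)`-valued extension to the disc `|t| < 1/2` of `t ↦ ρ^t X ρ^{-t}`, the latter being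
expressed by `F t * ρ^t = ρ^t * X` and `ρ^t * F (-t) = X * ρ^t` for real `0 ≤ t < 1/2`. -/
def IsArakiFamily (ρ X : H →L[ℂ] H) (F : ℂ → H →L[ℂ] H) : Prop :=
  DifferentiableOn ℂ F (ball (0:ℂ) (1/2)) ∧
  (∃ M : ℝ, ∀ t ∈ ball (0:ℂ) (1/2), ‖F t‖ ≤ M) ∧
  (∀ t : ℝ, 0 ≤ t → t < 1/2 → F (t:ℂ) * opow ρ t = opow ρ t * X) ∧
  (∀ t : ℝ, 0 ≤ t → t < 1/2 → opow ρ t * F (-(t:ℂ)) = X * opow ρ t)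

/-- `X` satisfies the Araki condition for `ρ`. -/
def SatisfiesAraki (ρ X : H →L[ℂ] H) : Prop := ∃ F, IsArakiFamily ρ X F

/-- The Araki norm `‖X‖_A = sup_{|t| < 1/2} ‖ρ^t X ρ^{-t}‖`. -/
def arakiNorm (ρ X : H →L[ℂ] H) : ℝ :=
  sInf {M : ℝ | 0 ≤ M ∧ ∃ F, IsArakiFamily ρ X F ∧ ∀ t ∈ ball (0:ℂ) (1/2), ‖F t‖ ≤ M}

/-- `σ = exp (-(H₀ + X))` where `ρ = exp (-H₀)`: the semigroup `t ↦ σ^t` is the mild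
(Duhamel) solution of the semigroup `t ↦ ρ^t` perturbed by the bounded operator `-X`,
i.e. `σ^t = ρ^t - ∫_0^t ρ^{t-s} X σ^s ds` for all `t ≥ 0`. -/
def IsExpPerturbed (ρ σ X : H →L[ℂ] H) : Prop :=
  ∀ t : ℝ, 0 ≤ t →
    opow σ t = opow ρ t - ∫ s in (0:ℝ)..t, opow ρ (t - s) * X * opow σ s

/-- The truncation `x ↦ -log (x + e^{-n})` of `-log`; it increases pointwise to `-log x`
as `n → ∞` and is operator anti-monotone. -/
def negLogTrunc (n : ℕ) (x : ℝ) : ℝ := - Real.log (x + Real.exp (-(n:ℝ)))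

/-- The regularised quadratic form `⟪ξ, (-log (ρ + e^{-n})) ξ⟫` of `H₀ = -log ρ`. -/
def negLogFormSeq (ρ : H →L[ℂ] H) (ξ : H) (n : ℕ) : ℝ :=
  (⟪ξ, (cfc (negLogTrunc n) ρ) ξ⟫_ℂ).re

/-- `ξ` lies in the form domain `Q(H₀) = Dom (H₀^{1/2})` of `H₀ = -log ρ`. -/
def InFormDomain (ρ : H →L[ℂ] H) (ξ : H) : Prop :=
  BddAbove (Set.range (negLogFormSeq ρ ξ))

/-- The value `⟪ξ, H₀ ξ⟫` of the quadratic form of `H₀ = -log ρ` (a monotone limit). -/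
def negLogForm (ρ : H →L[ℂ] H) (ξ : H) : ℝ := ⨆ n, negLogFormSeq ρ ξ n

/-- The regularised quadratic form `⟪ξ, (σ + e^{-n})⁻¹ ξ⟫` of `σ⁻¹`. -/
def invFormSeq (σ : H →L[ℂ] H) (ξ : H) (n : ℕ) : ℝ :=
  (⟪ξ, (cfc (fun x : ℝ => (x + Real.exp (-(n:ℝ)))⁻¹) σ) ξ⟫_ℂ).re

/-- The quadratic form `⟪ξ, σ⁻¹ ξ⟫ ∈ [0, ∞]` of the (possibly unbounded) inverse `σ⁻¹`
of the injective positive operator `σ`, as a monotone limit of regularisations. -/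
def invForm (σ : H →L[ℂ] H) (ξ : H) : ℝ≥0∞ :=
  ⨆ n : ℕ, ENNReal.ofReal (invFormSeq σ ξ n)

/-- `S` is the relative entropy `S(ρ|σ) = Tr (ρ (log ρ - log σ))`, obtained as the limit of
the regularised quantities `Tr (ρ (log (ρ + e^{-n}) - log (σ + e^{-n})))`. -/
def IsRelativeEntropy {ι : Type*} (b : HilbertBasis ι ℂ H) (ρ σ : H →L[ℂ] H) (S : ℝ) : Prop :=
  Tendsto (fun n : ℕ => trElem b (ρ * (cfc (negLogTrunc n) σ - cfc (negLogTrunc n) ρ)))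
    atTop (nhds S)

/-- The `n`-th term of the Matsubara (Dyson/expansional) series: the integral over the
ordered simplex `0 ≤ s₁ ≤ ⋯ ≤ sₙ ≤ 1` (of volume `1/n!`) of the product
`F(s₁ - 1/2) ⋯ F(sₙ - 1/2)`, where `F t = ρ^t X ρ^{-t}`. -/
def matsubaraTerm (F : ℂ → H →L[ℂ] H) (n : ℕ) : H →L[ℂ] H :=
  ∫ s in {s : Fin n → ℝ | (∀ i, s i ∈ Set.Icc (0:ℝ) 1) ∧ Monotone s},
    (List.ofFn fun i => F (((s i - 1/2 : ℝ) : ℂ))).prod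

/-!
Formally `log ρ - log σ = X`, so `S(ρ|σ) = Tr (ρ X)` and `S(σ|ρ) = -Tr (σ X)`. The logarithms are
unbounded, but two facts make this precise for `D ε = log (ρ + ε) - log (σ + ε)`.

* Operator monotonicity of the logarithm turns `C⁻¹ ρ ≤ σ ≤ C ρ` into `‖D ε‖ ≤ log C`.
* Multiplying the Duhamel equation by `ρ` on the left and by `σ` on the right and taking the right
  derivative at `t = 0` gives `ρ X σ = (ρ log ρ) σ - ρ (σ log σ)`, which is the norm limit of
  `ρ (D ε) σ` as `ε → 0`.

Since `ρ` and `σ` have dense range, these two facts force `D ε → X` weakly, and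
`T ↦ Tr (ρ T) = ∑ i, ⟪√ρ (b i), T (√ρ (b i))⟫` passes to bounded weak limits by dominated
convergence.
-/

section RealInequalities

theorem abs_negMulLog_add_mul_log_add_le {x ε : ℝ} (hx : 0 ≤ x) (hε : 0 ≤ ε) :
    |Real.negMulLog x + x * Real.log (x + ε)| ≤ ε := by
  obtain rfl | hx := hx.eq_or_lt
  · simpa using hε
  have hlog : Real.log (x + ε) - Real.log x ≤ ε / x := by
    rw [← Real.log_div (by positivity) hx.ne']
    calc Real.log ((x + ε) / x) ≤ (x + ε) / x - 1 := Real.log_le_sub_one_of_pos (by positivity)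
      _ = ε / x := by field_simp; ring
  have hmono : Real.log x ≤ Real.log (x + ε) := Real.log_le_log hx (by linarith)
  have heq : Real.negMulLog x + x * Real.log (x + ε) = x * (Real.log (x + ε) - Real.log x) := by
    rw [Real.negMulLog]; ring
  rw [heq, abs_of_nonneg (mul_nonneg hx.le (sub_nonneg.2 hmono))]
  calc x * (Real.log (x + ε) - Real.log x) ≤ x * (ε / x) := by gcongr
    _ = ε := by field_simp

theorem abs_inv_mul_sub_rpow_sub_negMulLog_le {x t : ℝ} (hx : 0 ≤ x) (ht : 0 < t) :
    |t⁻¹ * (x - x ^ (1 + t)) - Real.negMulLog x| ≤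
      |(x ^ (1 / 2 + t) - x ^ (1 / 2 : ℝ)) * (√x * Real.log x)| := by
  obtain rfl | hx := hx.eq_or_lt
  · simp [Real.zero_rpow (by linarith : 1 + t ≠ 0)]
  have hpow (r : ℝ) : x ^ (r + t) = x ^ r * Real.exp (t * Real.log x) := by
    rw [Real.rpow_add hx, Real.rpow_def_of_pos hx t, mul_comm t]
  set u := t * Real.log x with hu
  have hexp : 0 ≤ Real.exp u - 1 - u := by linarith [Real.add_one_le_exp u]
  have hexp' : Real.exp u - 1 ≤ u * Real.exp u := by
    have hneg := Real.add_one_le_exp (-u)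
    have hinv : Real.exp u * Real.exp (-u) = 1 := by
      rw [← Real.exp_add, add_neg_cancel, Real.exp_zero]
    nlinarith [Real.exp_pos u]
  calc |t⁻¹ * (x - x ^ (1 + t)) - Real.negMulLog x|
      = |t⁻¹ * x * (Real.exp u - 1 - u)| := by
        rw [hpow, Real.rpow_one, ← abs_neg, Real.negMulLog, hu]; congr 1; field_simp; ring
    _ ≤ |t⁻¹ * x * (u * Real.exp u - u)| := by
        simp only [abs_mul]; gcongr
    _ = |(x ^ (1 / 2 + t) - x ^ (1 / 2 : ℝ)) * (√x * Real.log x)| := by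
        rw [hpow, ← Real.sqrt_eq_rpow, hu]
        nth_rw 1 [← Real.mul_self_sqrt hx.le]
        congr 1; field_simp

theorem continuous_sqrt_mul_log : Continuous fun x : ℝ => √x * Real.log x := by
  refine ((Real.continuous_mul_log.comp Real.continuous_sqrt).const_mul 2).congr fun x => ?_
  obtain hx | hx := le_total 0 x
  · rw [Function.comp_apply, Real.log_sqrt hx]; ring
  · simp [Real.sqrt_eq_zero_of_nonpos hx]

end RealInequalities

section RightDerivative

open scoped Topology

theorem tendsto_inv_smul_intervalIntegral_sub {F : Type*} [NormedAddCommGroup F]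
    [NormedSpace ℝ F] [CompleteSpace F] {g : ℝ → ℝ → F}
    (hg : ContinuousOn (Function.uncurry g) (Set.Ici 0 ×ˢ Set.Ici 0)) :
    Tendsto (fun t : ℝ => t⁻¹ • ∫ s in 0..t, g (t - s) s) (𝓝[>] 0)
      (𝓝 (g 0 0)) := by
  rw [Metric.tendsto_nhds]
  intro ε hε
  obtain ⟨δ, hδ, hclose⟩ := Metric.continuousWithinAt_iff.1
    (hg (0, 0) ⟨Set.self_mem_Ici, Set.self_mem_Ici⟩) (ε / 2) (by positivity)
  filter_upwards [Ioo_mem_nhdsGT hδ] with t ⟨ht, htδ⟩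
  have hint : IntervalIntegrable (fun s => g (t - s) s) volume 0 t := by
    refine ContinuousOn.intervalIntegrable_of_Icc ht.le ?_
    exact hg.comp (f := fun s => (t - s, s)) (by fun_prop) fun s hs => ⟨sub_nonneg.2 hs.2, hs.1⟩
  have hbound : ‖∫ s in 0..t, (g (t - s) s - g 0 0)‖ ≤ ε / 2 * |t - 0| := by
    refine intervalIntegral.norm_integral_le_of_norm_le_const fun s hs => ?_
    rw [Set.uIoc_of_le ht.le] at hs
    rw [← dist_eq_norm]
    refine (hclose (x := (t - s, s)) ⟨sub_nonneg.2 hs.2, hs.1.le⟩ ?_).le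
    rw [Prod.dist_eq, max_lt_iff, Real.dist_0_eq_abs, Real.dist_0_eq_abs,
      abs_of_nonneg (sub_nonneg.2 hs.2), abs_of_pos hs.1]
    constructor <;> linarith [hs.1, hs.2]
  have heq : t⁻¹ • (∫ s in 0..t, g (t - s) s) - g 0 0 =
      t⁻¹ • ∫ s in 0..t, (g (t - s) s - g 0 0) := by
    rw [intervalIntegral.integral_sub hint (by simp), intervalIntegral.integral_const, sub_zero,
      smul_sub, inv_smul_smul₀ ht.ne']
  rw [sub_zero, abs_of_pos ht] at hbound
  rw [dist_eq_norm, heq, norm_smul, norm_inv, Real.norm_of_nonneg ht.le]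
  calc t⁻¹ * ‖∫ s in 0..t, (g (t - s) s - g 0 0)‖ ≤ t⁻¹ * (ε / 2 * t) := by gcongr
    _ = ε / 2 := by field_simp
    _ < ε := by linarith

end RightDerivative

section CStarAlgebra

open scoped Topology

theorem norm_cfc_le_norm_cfc_of_norm_le {𝕜 A : Type*} {p : A → Prop} [RCLike 𝕜] [NormedRing A]
    [StarRing A] [NormedAlgebra 𝕜 A] [IsometricContinuousFunctionalCalculus 𝕜 A p] {f g : 𝕜 → 𝕜}
    {a : A} (hfg : ∀ x ∈ spectrum 𝕜 a, ‖f x‖ ≤ ‖g x‖) (hg : ContinuousOn g (spectrum 𝕜 a))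
    (ha : p a) : ‖cfc f a‖ ≤ ‖cfc g a‖ :=
  norm_cfc_le (norm_nonneg _) fun x hx => (hfg x hx).trans (norm_apply_le_norm_cfc g a hx hg ha)

variable {A : Type*} [CStarAlgebra A] [PartialOrder A] [StarOrderedRing A]

theorem rpow_add_of_nonneg (a : A) {s t : ℝ} (hs : 0 ≤ s) (ht : 0 ≤ t) :
    a ^ (s + t) = a ^ s * a ^ t := by
  simp only [CFC.rpow_def]
  rw [← cfc_mul _ _ a (NNReal.continuous_rpow_const hs).continuousOn
    (NNReal.continuous_rpow_const ht).continuousOn]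
  simp only [NNReal.rpow_add_of_nonneg _ hs ht]

theorem continuousAt_const_rpow_of_pos (a : A) {s : ℝ} (hs : 0 < s) :
    ContinuousAt (fun t : ℝ => a ^ t) s := by
  simp only [CFC.rpow_def]
  refine continuousAt_cfc_fun ?_ ?_
  · have hcont : ContinuousOn (fun p : ℝ × ℝ≥0 => p.2 ^ p.1)
        (Set.Icc (s / 2) (s + 1) ×ˢ spectrum ℝ≥0 a) := by
      intro p hp
      have hp1 : 0 < p.1 := lt_of_lt_of_le (by linarith) hp.1.1
      exact (ContinuousAt.comp (f := fun p : ℝ × ℝ≥0 => (p.2, p.1)) (x := p)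
        (NNReal.continuousAt_rpow (Or.inr hp1)) (by fun_prop)).continuousWithinAt
    have hunif := (isCompact_Icc.prod
      (spectrum.isCompact_nnreal a)).uniformContinuousOn_of_continuous hcont
    have hlim := UniformContinuousOn.tendstoUniformlyOn (F := fun (t : ℝ) (x : ℝ≥0) => x ^ t)
      (x := s) hunif ⟨by linarith, by linarith⟩
    rwa [nhdsWithin_eq_nhds.2 (Icc_mem_nhds (by linarith) (by linarith))] at hlim
  · filter_upwards [lt_mem_nhds hs] with t ht
    exact (NNReal.continuous_rpow_const ht.le).continuousOn

theorem tendsto_inv_smul_sub_rpow_one_add {a : A} (ha : 0 ≤ a) :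
    Tendsto (fun t : ℝ => t⁻¹ • (a - a ^ (1 + t))) (𝓝[>] 0)
      (𝓝 (cfc Real.negMulLog a)) := by
  have hpow : ∀ {r : ℝ}, 0 < r → ContinuousOn (fun x : ℝ => x ^ r) (spectrum ℝ a) :=
    fun hr => (Real.continuous_rpow_const hr.le).continuousOn
  have hsqrt : ContinuousOn (fun x => √x * Real.log x) (spectrum ℝ a) :=
    continuous_sqrt_mul_log.continuousOn
  have hmaj : Tendsto (fun t : ℝ => (a ^ (1 / 2 + t) - a ^ (1 / 2 : ℝ)) *
      cfc (fun x => √x * Real.log x) a) (𝓝 0) (𝓝 0) := by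
    have hcont : ContinuousAt (fun t : ℝ => a ^ (1 / 2 + t)) 0 :=
      ContinuousAt.comp (f := fun t : ℝ => 1 / 2 + t)
        (continuousAt_const_rpow_of_pos a (by norm_num)) (by fun_prop)
    have h := (hcont.sub_const (a ^ (1 / 2 : ℝ))).mul_const (cfc (fun x => √x * Real.log x) a)
    simpa [ContinuousAt] using h
  rw [← tendsto_sub_nhds_zero_iff]
  refine squeeze_zero_norm' ?_
    (tendsto_zero_iff_norm_tendsto_zero.1 (hmaj.mono_left nhdsWithin_le_nhds))
  filter_upwards [self_mem_nhdsWithin] with t (ht : 0 < t)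
  have hpow_one_add := hpow (by linarith : 0 < 1 + t)
  have hpow_half_add := hpow (by linarith : 0 < 1 / 2 + t)
  have hpow_half := hpow (by norm_num : (0 : ℝ) < 1 / 2)
  have hquot : t⁻¹ • (a - a ^ (1 + t)) = cfc (fun x : ℝ => t⁻¹ * (x - x ^ (1 + t))) a := by
    rw [cfc_const_mul _ _ a, cfc_sub _ _ a, cfc_id' ℝ a, CFC.rpow_eq_cfc_real ha]
  rw [hquot, CFC.rpow_eq_cfc_real ha, CFC.rpow_eq_cfc_real ha, ← cfc_sub _ _ a,
    ← cfc_sub _ _ a, ← cfc_mul _ _ a]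
  exact norm_cfc_le_norm_cfc_of_norm_le (fun x hx => abs_inv_mul_sub_rpow_sub_negMulLog_le
    (spectrum_nonneg_of_nonneg ha hx) ht) ((hpow_half_add.sub hpow_half).mul hsqrt) (.of_nonneg ha)

theorem isStrictlyPositive_add_algebraMap {a : A} (ha : 0 ≤ a) {ε : ℝ} (hε : 0 < ε) :
    IsStrictlyPositive (a + algebraMap ℝ A ε) := by
  have h : IsStrictlyPositive (algebraMap ℝ A ε) := by
    rw [Algebra.algebraMap_eq_smul_one]
    exact isStrictlyPositive_one.smul hε
  exact h.of_le (le_add_of_nonneg_left ha)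

theorem log_add_algebraMap_eq_cfc {a : A} (ha : 0 ≤ a) {ε : ℝ} (hε : 0 < ε) :
    CFC.log (a + algebraMap ℝ A ε) = cfc (fun x => Real.log (x + ε)) a := by
  have hlog : ContinuousOn Real.log ((fun x : ℝ => x + ε) '' spectrum ℝ a) := by
    refine Real.continuousOn_log.mono ?_
    rintro _ ⟨x, hx, rfl⟩
    exact (add_pos_of_nonneg_of_pos (spectrum_nonneg_of_nonneg ha hx) hε).ne'
  have hadd : a + algebraMap ℝ A ε = cfc (fun x : ℝ => x + ε) a := by
    rw [cfc_add_const _ _ a, cfc_id' ℝ a]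
  rw [hadd, CFC.log, ← cfc_comp' Real.log (fun x : ℝ => x + ε) a hlog]

theorem tendsto_mul_log_add_algebraMap {a : A} (ha : 0 ≤ a) :
    Tendsto (fun ε : ℝ => a * CFC.log (a + algebraMap ℝ A ε)) (𝓝[>] 0)
      (𝓝 (-cfc Real.negMulLog a)) := by
  rw [← tendsto_sub_nhds_zero_iff]
  refine squeeze_zero_norm' ?_ (tendsto_nhdsWithin_of_tendsto_nhds tendsto_id)
  filter_upwards [self_mem_nhdsWithin] with ε (hε : 0 < ε)
  have hlog : ContinuousOn (fun x => Real.log (x + ε)) (spectrum ℝ a) :=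
    ContinuousOn.log (by fun_prop) fun x hx =>
      (add_pos_of_nonneg_of_pos (spectrum_nonneg_of_nonneg ha hx) hε).ne'
  have hcfc : a * CFC.log (a + algebraMap ℝ A ε) - -cfc Real.negMulLog a =
      cfc (fun x => Real.negMulLog x + x * Real.log (x + ε)) a := by
    rw [cfc_add a _ _, cfc_mul _ _ a, cfc_id' ℝ a, log_add_algebraMap_eq_cfc ha hε, sub_neg_eq_add,
      add_comm]
  rw [hcfc]
  exact norm_cfc_le hε.le fun x hx =>
    abs_negMulLog_add_mul_log_add_le (spectrum_nonneg_of_nonneg ha hx) hε.le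

theorem norm_log_sub_log_le {a b : A} (ha : IsStrictlyPositive a) (hb : IsStrictlyPositive b)
    {C : ℝ} (hC : 1 ≤ C) (hab : a ≤ C • b) (hba : b ≤ C • a) :
    ‖CFC.log a - CFC.log b‖ ≤ Real.log C := by
  have hlog {x y : A} (hx : IsStrictlyPositive x) (hy : IsStrictlyPositive y) (hxy : x ≤ C • y) :
      CFC.log x - CFC.log y ≤ algebraMap ℝ A (Real.log C) := by
    rw [sub_le_iff_le_add, ← CFC.log_smul' y (by linarith) hy]
    exact CFC.log_le_log hxy hx
  have hsa : IsSelfAdjoint (CFC.log a - CFC.log b) := IsSelfAdjoint.log.sub .log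
  have hlower : algebraMap ℝ A (-Real.log C) ≤ CFC.log a - CFC.log b := by
    rw [map_neg, neg_le, neg_sub]
    exact hlog hb ha hba
  rw [← cfc_id' ℝ (CFC.log a - CFC.log b)]
  exact norm_cfc_le (Real.log_nonneg hC) fun x hx => abs_le.2
    ⟨(algebraMap_le_iff_le_spectrum hsa).1 hlower x hx,
      (le_algebraMap_iff_spectrum_le hsa).1 (hlog ha hb hab) x hx⟩

theorem norm_log_add_algebraMap_sub_le {a b : A} (ha : 0 ≤ a) (hb : 0 ≤ b) {C : ℝ} (hC : 1 ≤ C)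
    (hab : a ≤ C • b) (hba : b ≤ C • a) {ε : ℝ} (hε : 0 < ε) :
    ‖CFC.log (a + algebraMap ℝ A ε) - CFC.log (b + algebraMap ℝ A ε)‖ ≤ Real.log C := by
  have hshift {x y : A} (hxy : x ≤ C • y) :
      x + algebraMap ℝ A ε ≤ C • (y + algebraMap ℝ A ε) := by
    rw [smul_add, Algebra.smul_def C (algebraMap ℝ A ε), ← map_mul]
    exact add_le_add hxy (algebraMap_mono A (le_mul_of_one_le_left hε.le hC))
  exact norm_log_sub_log_le (isStrictlyPositive_add_algebraMap ha hε)
    (isStrictlyPositive_add_algebraMap hb hε) hC (hshift hab) (hshift hba)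

theorem norm_rpow_le_max_one_rpow {a : A} (ha : 0 ≤ a) {s t : ℝ} (hs : 0 < s) (hst : s ≤ t) :
    ‖a ^ s‖ ≤ max 1 ‖a‖ ^ t := by
  rw [CFC.norm_rpow a hs]
  calc ‖a‖ ^ s ≤ max 1 ‖a‖ ^ s := by gcongr; exact le_max_right _ _
    _ ≤ max 1 ‖a‖ ^ t := Real.rpow_le_rpow_of_exponent_le (le_max_left _ _) hst

theorem intervalIntegrable_rpow_sub_mul_mul_rpow {a b : A} (ha : 0 ≤ a) (hb : 0 ≤ b) (x : A)
    {t : ℝ} (ht : 0 ≤ t) :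
    IntervalIntegrable (fun s => a ^ (t - s) * x * b ^ s) volume 0 t := by
  rw [intervalIntegrable_iff_integrableOn_Ioo_of_le ht]
  refine IntegrableOn.of_bound (by simp) ?_ (max 1 ‖a‖ ^ t * ‖x‖ * max 1 ‖b‖ ^ t) ?_
  · refine ContinuousOn.aestronglyMeasurable (fun s hs => ?_) measurableSet_Ioo
    have hleft : ContinuousAt (fun s => a ^ (t - s)) s :=
      ContinuousAt.comp (f := fun s => t - s)
        (continuousAt_const_rpow_of_pos a (sub_pos.2 hs.2)) (by fun_prop)
    exact ((hleft.mul_const x).mul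
      (continuousAt_const_rpow_of_pos b hs.1)).continuousWithinAt
  · filter_upwards [ae_restrict_mem measurableSet_Ioo] with s hs
    refine (norm_mul₃_le).trans ?_
    gcongr
    · exact norm_rpow_le_max_one_rpow ha (sub_pos.2 hs.2) (sub_le_self t hs.1.le)
    · exact norm_rpow_le_max_one_rpow hb hs.1 hs.2.le

theorem mul_integral_rpow_mul {a b : A} (ha : 0 ≤ a) (hb : 0 ≤ b) (x : A) {t : ℝ} (ht : 0 ≤ t) :
    a * (∫ s in 0..t, a ^ (t - s) * x * b ^ s) * b =
      ∫ s in 0..t, a ^ (1 + (t - s)) * x * b ^ (1 + s) := by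
  rw [← ContinuousLinearMap.mulLeftRight_apply ℝ A a b,
    ← ContinuousLinearMap.intervalIntegral_comp_comm _
      (intervalIntegrable_rpow_sub_mul_mul_rpow ha hb x ht)]
  refine intervalIntegral.integral_congr fun s hs => ?_
  rw [Set.uIcc_of_le ht] at hs
  simp only [ContinuousLinearMap.mulLeftRight_apply]
  rw [rpow_add_of_nonneg a zero_le_one (sub_nonneg.2 hs.2), add_comm 1 s,
    rpow_add_of_nonneg b hs.1 zero_le_one, CFC.rpow_one a, CFC.rpow_one b]
  simp only [mul_assoc]

theorem mul_cfc_negMulLog_sub_cfc_negMulLog_mul {a b x : A} (ha : 0 ≤ a) (hb : 0 ≤ b)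
    (hduhamel : ∀ t : ℝ, 0 < t → b ^ t = a ^ t - ∫ s in 0..t, a ^ (t - s) * x * b ^ s) :
    a * cfc Real.negMulLog b - cfc Real.negMulLog a * b = a * x * b := by
  have hleft : Tendsto
      (fun t : ℝ => a * (t⁻¹ • (b - b ^ (1 + t))) - t⁻¹ • (a - a ^ (1 + t)) * b)
      (𝓝[>] 0)
      (𝓝 (a * cfc Real.negMulLog b - cfc Real.negMulLog a * b)) :=
    ((tendsto_inv_smul_sub_rpow_one_add hb).const_mul a).sub
      ((tendsto_inv_smul_sub_rpow_one_add ha).mul_const b)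
  have hcont : ContinuousOn (Function.uncurry fun r s : ℝ => a ^ (1 + r) * x * b ^ (1 + s))
      (Set.Ici 0 ×ˢ Set.Ici 0) := by
    intro p hp
    have hpos {r : ℝ} (hr : 0 ≤ r) : 0 < 1 + r := by linarith
    have hleft_cont : ContinuousAt (fun p : ℝ × ℝ => a ^ (1 + p.1)) p :=
      ContinuousAt.comp (f := fun p : ℝ × ℝ => 1 + p.1)
        (continuousAt_const_rpow_of_pos a (hpos hp.1)) (by fun_prop)
    have hright_cont : ContinuousAt (fun p : ℝ × ℝ => b ^ (1 + p.2)) p :=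
      ContinuousAt.comp (f := fun p : ℝ × ℝ => 1 + p.2)
        (continuousAt_const_rpow_of_pos b (hpos hp.2)) (by fun_prop)
    exact ((hleft_cont.mul_const x).mul hright_cont).continuousWithinAt
  have hright := tendsto_inv_smul_intervalIntegral_sub hcont
  simp only [add_zero, CFC.rpow_one a, CFC.rpow_one b] at hright
  refine tendsto_nhds_unique (hleft.congr' ?_) hright
  filter_upwards [self_mem_nhdsWithin] with t (ht : 0 < t)
  rw [← mul_integral_rpow_mul ha hb x ht.le,
    ← sub_eq_iff_eq_add.2 (eq_sub_iff_add_eq'.1 (hduhamel t ht)).symm,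
    rpow_add_of_nonneg a zero_le_one ht.le, add_comm 1 t,
    rpow_add_of_nonneg b ht.le zero_le_one, CFC.rpow_one a, CFC.rpow_one b, mul_smul_comm,
    smul_mul_assoc, ← smul_sub]
  congr 1
  noncomm_ring

theorem tendsto_mul_log_add_algebraMap_sub_mul {a b x : A} (ha : 0 ≤ a) (hb : 0 ≤ b)
    (hduhamel : ∀ t : ℝ, 0 < t → b ^ t = a ^ t - ∫ s in 0..t, a ^ (t - s) * x * b ^ s) :
    Tendsto (fun ε : ℝ =>
        a * (CFC.log (a + algebraMap ℝ A ε) - CFC.log (b + algebraMap ℝ A ε)) * b)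
      (𝓝[>] 0) (𝓝 (a * x * b)) := by
  have hcomm {ε : ℝ} (hε : 0 < ε) : Commute b (CFC.log (b + algebraMap ℝ A ε)) := by
    rw [log_add_algebraMap_eq_cfc hb hε]
    exact ((Commute.refl b).cfc_real _).symm
  have hlim := ((tendsto_mul_log_add_algebraMap ha).mul_const b).sub
    ((tendsto_mul_log_add_algebraMap hb).const_mul a)
  rw [← mul_cfc_negMulLog_sub_cfc_negMulLog_mul ha hb hduhamel,
    (by noncomm_ring : a * cfc Real.negMulLog b - cfc Real.negMulLog a * b =
      -cfc Real.negMulLog a * b - a * -cfc Real.negMulLog b)]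
  refine hlim.congr' ?_
  filter_upwards [self_mem_nhdsWithin] with ε (hε : 0 < ε)
  rw [(hcomm hε).eq, mul_sub, sub_mul, mul_assoc a (CFC.log (b + _)) b]

end CStarAlgebra

section HilbertSpace

open scoped Topology

variable {𝕜 E F : Type*} [RCLike 𝕜] [NormedAddCommGroup E] [InnerProductSpace 𝕜 E]
  [NormedAddCommGroup F] [InnerProductSpace 𝕜 F]

theorem denseRange_adjoint_of_injective [CompleteSpace E] [CompleteSpace F] {T : E →L[𝕜] F}
    (hT : Function.Injective T) : DenseRange T.adjoint := by
  have hker := T.orthogonal_ker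
  rw [LinearMap.ker_eq_bot.2 hT, Submodule.bot_orthogonal_eq_top] at hker
  exact Submodule.dense_iff_topologicalClosure_eq_top.2 hker.symm

theorem tendsto_of_dense_of_dist_le {α X Y : Type*} [PseudoMetricSpace X] [PseudoMetricSpace Y]
    {l : Filter α} {f : α → X → Y} {g : X → Y} {K : ℝ}
    (hf : ∀ i x x', dist (f i x) (f i x') ≤ K * dist x x') (hg : Continuous g) {s : Set X}
    (hs : Dense s) (hlim : ∀ x ∈ s, Tendsto (f · x) l (𝓝 (g x))) (x : X) :
    Tendsto (f · x) l (𝓝 (g x)) := by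
  have hequi : Equicontinuous f := (LipschitzWith.uniformEquicontinuous f K.toNNReal
    fun i => .of_dist_le' (hf i)).equicontinuous
  exact (hequi.isClosed_setOfPred_tendsto hg).closure_subset_iff.2 hlim (hs x)

theorem tendsto_inner_of_dense {α : Type*} {l : Filter α} {D : α → E →L[𝕜] F} {T : E →L[𝕜] F}
    {M : ℝ} (hD : ∀ i, ‖D i‖ ≤ M) {s : Set E} {t : Set F} (hs : Dense s) (ht : Dense t)
    (hlim : ∀ x ∈ s, ∀ y ∈ t, Tendsto (fun i => inner 𝕜 y (D i x)) l (𝓝 (inner 𝕜 y (T x))))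
    (x : E) (y : F) :
    Tendsto (fun i => inner 𝕜 y (D i x)) l (𝓝 (inner 𝕜 y (T x))) := by
  have hinner (i : α) (x : E) (y : F) : ‖inner 𝕜 y (D i x)‖ ≤ ‖y‖ * (M * ‖x‖) :=
    (norm_inner_le_norm _ _).trans (by gcongr; exact (D i).le_of_opNorm_le (hD i) x)
  have hleft (y : F) (hy : y ∈ t) (x : E) :
      Tendsto (fun i => inner 𝕜 y (D i x)) l (𝓝 (inner 𝕜 y (T x))) :=
    tendsto_of_dense_of_dist_le (K := ‖y‖ * M) (f := fun i x => inner 𝕜 y (D i x))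
      (fun i x x' => by
        rw [dist_eq_norm, dist_eq_norm, ← inner_sub_right, ← map_sub, mul_assoc]
        exact hinner i _ y)
      (by fun_prop) hs (fun x hx => hlim x hx y hy) x
  exact tendsto_of_dense_of_dist_le (K := M * ‖x‖) (f := fun i y => inner 𝕜 y (D i x))
    (fun i y y' => by
      rw [dist_eq_norm, dist_eq_norm, ← inner_sub_left, mul_comm]
      exact hinner i x _)
    (by fun_prop) ht (fun y hy => hleft y hy x) y

theorem tendsto_inner_of_tendsto_apply_apply_apply [CompleteSpace F] {G K α : Type*}
    [NormedAddCommGroup G] [InnerProductSpace 𝕜 G] [CompleteSpace G] [TopologicalSpace K]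
    {l : Filter α} {D : α → E →L[𝕜] F} {T : E →L[𝕜] F} {M : ℝ} (hD : ∀ i, ‖D i‖ ≤ M)
    {P : F →L[𝕜] G} (hP : DenseRange P.adjoint) {Q : K → E} (hQ : DenseRange Q)
    (hlim : ∀ z, Tendsto (fun i => P (D i (Q z))) l (𝓝 (P (T (Q z))))) (x : E) (y : F) :
    Tendsto (fun i => inner 𝕜 y (D i x)) l (𝓝 (inner 𝕜 y (T x))) := by
  refine tendsto_inner_of_dense hD hQ hP ?_ x y
  rintro _ ⟨z, rfl⟩ _ ⟨w, rfl⟩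
  simp only [ContinuousLinearMap.adjoint_inner_left]
  exact tendsto_const_nhds.inner (hlim z)

variable {ι κ : Type*}

theorem hasSum_norm_inner_sq (b : HilbertBasis ι 𝕜 E) (x : E) :
    HasSum (fun i => ‖inner 𝕜 (b i) x‖ ^ 2) (‖x‖ ^ 2) := by
  have h := RCLike.hasSum_re 𝕜 (b.hasSum_inner_mul_inner x x)
  simpa only [← inner_conj_symm x (b _), RCLike.conj_mul, inner_self_eq_norm_sq_to_K,
    ← RCLike.ofReal_pow, RCLike.ofReal_re] using h

theorem summable_norm_inner_apply_sq (b : HilbertBasis ι 𝕜 E) (c : HilbertBasis κ 𝕜 F)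
    {T : E →L[𝕜] F} (hT : Summable fun i => ‖T (b i)‖ ^ 2) :
    Summable fun p : ι × κ => ‖inner 𝕜 (c p.2) (T (b p.1))‖ ^ 2 := by
  rw [summable_prod_of_nonneg fun p => by positivity]
  refine ⟨fun i => (hasSum_norm_inner_sq c (T (b i))).summable, ?_⟩
  simpa only [(hasSum_norm_inner_sq c (T (b _))).tsum_eq] using hT

theorem hasSum_inner_adjoint_apply [CompleteSpace E] [CompleteSpace F] (b : HilbertBasis ι 𝕜 E)
    (c : HilbertBasis κ 𝕜 F) {S T : E →L[𝕜] F} (hS : Summable fun i => ‖S (b i)‖ ^ 2)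
    (hT : Summable fun i => ‖T (b i)‖ ^ 2) :
    HasSum (fun j => inner 𝕜 (T.adjoint (c j)) (S.adjoint (c j)))
      (∑' i, inner 𝕜 (S (b i)) (T (b i))) := by
  have hsum : Summable fun p : ι × κ =>
      inner 𝕜 (S (b p.1)) (c p.2) * inner 𝕜 (c p.2) (T (b p.1)) := by
    refine .of_norm_bounded ((summable_norm_inner_apply_sq b c hS).add
      (summable_norm_inner_apply_sq b c hT)) fun p => ?_
    rw [norm_mul, norm_inner_symm (S (b p.1))]
    nlinarith [two_mul_le_add_sq ‖inner 𝕜 (c p.2) (S (b p.1))‖ ‖inner 𝕜 (c p.2) (T (b p.1))‖,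
      norm_nonneg (inner 𝕜 (c p.2) (S (b p.1))), norm_nonneg (inner 𝕜 (c p.2) (T (b p.1)))]
  have hrows (i : ι) : HasSum (fun j => inner 𝕜 (S (b i)) (c j) * inner 𝕜 (c j) (T (b i)))
      (inner 𝕜 (S (b i)) (T (b i))) := c.hasSum_inner_mul_inner _ _
  have hcols (j : κ) : HasSum (fun i => inner 𝕜 (S (b i)) (c j) * inner 𝕜 (c j) (T (b i)))
      (inner 𝕜 (T.adjoint (c j)) (S.adjoint (c j))) := by
    simpa only [ContinuousLinearMap.adjoint_inner_left, ContinuousLinearMap.adjoint_inner_right,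
      mul_comm] using b.hasSum_inner_mul_inner (T.adjoint (c j)) (S.adjoint (c j))
  rw [(hsum.hasSum.prod_fiberwise hrows).tsum_eq]
  exact ((Equiv.prodComm κ ι).hasSum_iff.2 hsum.hasSum).prod_fiberwise hcols

theorem hasSum_inner_comp_adjoint_comp [CompleteSpace E] [CompleteSpace F]
    (b : HilbertBasis ι 𝕜 E) (c : HilbertBasis κ 𝕜 F) {R : E →L[𝕜] F}
    (hR : Summable fun i => ‖R (b i)‖ ^ 2) (T : F →L[𝕜] F) :
    HasSum (fun j => inner 𝕜 (c j) (R (R.adjoint (T (c j)))))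
      (∑' i, inner 𝕜 (R (b i)) (T (R (b i)))) := by
  have hTR : Summable fun i => ‖(T.adjoint ∘L R) (b i)‖ ^ 2 := by
    refine .of_nonneg_of_le (fun i => by positivity) (fun i => ?_) (hR.mul_left (‖T.adjoint‖ ^ 2))
    rw [← mul_pow]
    gcongr
    exact T.adjoint.le_opNorm _
  simpa only [ContinuousLinearMap.adjoint_comp, ContinuousLinearMap.adjoint_adjoint,
    ContinuousLinearMap.comp_apply, ContinuousLinearMap.adjoint_inner_left]
    using hasSum_inner_adjoint_apply b c hTR hR

end HilbertSpace

section FiniteWeight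

open scoped Topology

variable {E ι : Type*} [NormedAddCommGroup E] [InnerProductSpace ℂ E] [CompleteSpace E]
  {b : HilbertBasis ι ℂ E} {ρ σ X : E →L[ℂ] E}

theorem inner_sqrt_apply_sqrt_apply (hρ : 0 ≤ ρ) (x y : E) :
    ⟪CFC.sqrt ρ x, CFC.sqrt ρ y⟫_ℂ = ⟪x, ρ y⟫_ℂ := by
  have hsymm := ContinuousLinearMap.isSelfAdjoint_iff_isSymmetric.1
    (IsSelfAdjoint.of_nonneg (CFC.sqrt_nonneg ρ))
  nth_rw 3 [← CFC.sqrt_mul_sqrt_self ρ hρ]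
  exact hsymm x (CFC.sqrt ρ y)

theorem IsFiniteWeight.summable_norm_sqrt_sq (hρ : IsFiniteWeight b ρ) :
    Summable fun i => ‖CFC.sqrt ρ (b i)‖ ^ 2 := by
  refine hρ.2.2.congr fun i => ?_
  rw [← inner_sqrt_apply_sqrt_apply hρ.1]
  exact (norm_sq_eq_re_inner (𝕜 := ℂ) _).symm

theorem IsFiniteWeight.hasSum_re_inner_mul (hρ : IsFiniteWeight b ρ) (T : E →L[ℂ] E) :
    HasSum (fun i => (⟪b i, (ρ * T) (b i)⟫_ℂ).re)
      (∑' i, ⟪CFC.sqrt ρ (b i), T (CFC.sqrt ρ (b i))⟫_ℂ).re := by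
  have h := hasSum_inner_comp_adjoint_comp b b hρ.summable_norm_sqrt_sq T
  have hadj := (IsSelfAdjoint.of_nonneg (CFC.sqrt_nonneg ρ)).adjoint_eq
  have hmul (x : E) : CFC.sqrt ρ (CFC.sqrt ρ x) = ρ x :=
    DFunLike.congr_fun (CFC.sqrt_mul_sqrt_self ρ hρ.1) x
  simpa only [hadj, hmul, mul_apply_eq_comp] using Complex.hasSum_re h

theorem IsFiniteWeight.trElem_mul_add_trElem_mul (hρ : IsFiniteWeight b ρ)
    (hσ : IsFiniteWeight b σ) (S T : E →L[ℂ] E) :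
    trElem b (ρ * S) + trElem b (σ * T) = trElem b (ρ * S + σ * T) := by
  simp only [trElem, add_apply, inner_add_right, Complex.add_re]
  exact ((hρ.hasSum_re_inner_mul S).summable.tsum_add (hσ.hasSum_re_inner_mul T).summable).symm

theorem IsFiniteWeight.tendsto_trElem_mul (hρ : IsFiniteWeight b ρ) {α : Type*} {l : Filter α}
    {D : α → E →L[ℂ] E} {T : E →L[ℂ] E} {M : ℝ} (hD : ∀ i, ‖D i‖ ≤ M)
    (hweak : ∀ x, Tendsto (fun i => ⟪x, D i x⟫_ℂ) l (𝓝 ⟪x, T x⟫_ℂ)) :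
    Tendsto (fun i => trElem b (ρ * D i)) l (𝓝 (trElem b (ρ * T))) := by
  simp only [trElem, (hρ.hasSum_re_inner_mul _).tsum_eq]
  refine (Complex.continuous_re.tendsto _).comp
    (tendsto_tsum_of_dominated_convergence (hρ.summable_norm_sqrt_sq.mul_left M)
      (fun i => hweak _) (.of_forall fun n i => ?_))
  calc ‖⟪CFC.sqrt ρ (b i), D n (CFC.sqrt ρ (b i))⟫_ℂ‖
      ≤ ‖CFC.sqrt ρ (b i)‖ * (M * ‖CFC.sqrt ρ (b i)‖) :=
        (norm_inner_le_norm _ _).trans (by gcongr; exact (D n).le_of_opNorm_le (hD n) _)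
    _ = M * ‖CFC.sqrt ρ (b i)‖ ^ 2 := by ring

theorem opow_eq_rpow (hρ : 0 ≤ ρ) (t : ℝ) : opow ρ t = ρ ^ t :=
  (CFC.rpow_eq_cfc_real hρ).symm

theorem cfc_negLogTrunc_eq_neg_log (hρ : 0 ≤ ρ) (n : ℕ) :
    cfc (negLogTrunc n) ρ = -CFC.log (ρ + algebraMap ℝ _ (Real.exp (-n))) := by
  rw [log_add_algebraMap_eq_cfc hρ (Real.exp_pos _), ← cfc_neg]
  rfl

theorem cfc_negLogTrunc_sub (hρ : 0 ≤ ρ) (hσ : 0 ≤ σ) (n : ℕ) :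
    cfc (negLogTrunc n) σ - cfc (negLogTrunc n) ρ =
      CFC.log (ρ + algebraMap ℝ _ (Real.exp (-n))) -
        CFC.log (σ + algebraMap ℝ _ (Real.exp (-n))) := by
  rw [cfc_negLogTrunc_eq_neg_log hρ, cfc_negLogTrunc_eq_neg_log hσ, neg_sub_neg]

theorem IsNearby.exists_norm_cfc_negLogTrunc_sub_le (hσρ : IsNearby σ ρ) (hρ : 0 ≤ ρ)
    (hσ : 0 ≤ σ) : ∃ M : ℝ, ∀ n, ‖cfc (negLogTrunc n) σ - cfc (negLogTrunc n) ρ‖ ≤ M := by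
  obtain ⟨C, hC, hlower, hupper⟩ := hσρ
  have hC₀ : 0 < C := zero_lt_one.trans hC
  have hlower' : ρ ≤ C • σ := by
    simpa only [smul_inv_smul₀ hC₀.ne'] using smul_le_smul_of_nonneg_left hlower hC₀.le
  refine ⟨Real.log C, fun n => ?_⟩
  rw [cfc_negLogTrunc_sub hρ hσ]
  exact norm_log_add_algebraMap_sub_le hρ hσ hC.le hlower' hupper (Real.exp_pos _)

theorem IsExpPerturbed.tendsto_mul_cfc_negLogTrunc_sub_mul (hX : IsExpPerturbed ρ σ X)
    (hρ : 0 ≤ ρ) (hσ : 0 ≤ σ) :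
    Tendsto (fun n => ρ * (cfc (negLogTrunc n) σ - cfc (negLogTrunc n) ρ) * σ) atTop
      (𝓝 (ρ * X * σ)) := by
  have hduhamel (t : ℝ) (ht : 0 < t) :
      σ ^ t = ρ ^ t - ∫ s in 0..t, ρ ^ (t - s) * X * σ ^ s := by
    simpa only [opow_eq_rpow hρ, opow_eq_rpow hσ] using hX t ht.le
  have hexp : Tendsto (fun n : ℕ => Real.exp (-n)) atTop (𝓝[>] 0) :=
    tendsto_nhdsWithin_iff.2 ⟨Real.tendsto_exp_neg_atTop_nhds_zero.comp tendsto_natCast_atTop_atTop,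
      .of_forall fun n => Real.exp_pos _⟩
  simp only [cfc_negLogTrunc_sub hρ hσ]
  exact (tendsto_mul_log_add_algebraMap_sub_mul hρ hσ hduhamel).comp hexp

theorem IsExpPerturbed.tendsto_inner_cfc_negLogTrunc_sub (hX : IsExpPerturbed ρ σ X)
    (hρ : 0 ≤ ρ) (hσ : 0 ≤ σ) (hρinj : Function.Injective ρ) (hσinj : Function.Injective σ)
    {M : ℝ} (hM : ∀ n, ‖cfc (negLogTrunc n) σ - cfc (negLogTrunc n) ρ‖ ≤ M) (x y : E) :
    Tendsto (fun n => ⟪y, (cfc (negLogTrunc n) σ - cfc (negLogTrunc n) ρ) x⟫_ℂ) atTop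
      (𝓝 ⟪y, X x⟫_ℂ) := by
  have hσdense : DenseRange σ := by
    simpa only [(IsSelfAdjoint.of_nonneg hσ).adjoint_eq] using denseRange_adjoint_of_injective hσinj
  refine tendsto_inner_of_tendsto_apply_apply_apply hM (denseRange_adjoint_of_injective hρinj)
    hσdense (fun z => ?_) x y
  exact ((ContinuousLinearMap.apply ℂ E z).continuous.tendsto _).comp
    (hX.tendsto_mul_cfc_negLogTrunc_sub_mul hρ hσ)

end FiniteWeight

/-- Let `ρ = exp (-H₀)` and `σ = ρ_X = exp (-(H₀+X))` be finite
faithful weights with `X` bounded (self-adjoint) and `σ` nearby `ρ`.  Then both relative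
entropies `S(ρ|σ) = Tr (ρ (log ρ - log σ))` and `S(σ|ρ) = Tr (σ (log σ - log ρ))` are
finite (the regularised traces converge), and their sum satisfies
`S(ρ|σ) + S(σ|ρ) = Tr ((ρ - σ) X)`. -/
theorem statement11 {ι : Type*} (b : HilbertBasis ι ℂ H) (ρ σ X : H →L[ℂ] H)
    (hρ : IsFiniteWeight b ρ) (hσ : IsFiniteWeight b σ) (hX : IsSelfAdjoint X)
    (hσX : IsExpPerturbed ρ σ X) (hnear : IsNearby σ ρ) :
    ∃ S₁ S₂ : ℝ, IsRelativeEntropy b ρ σ S₁ ∧ IsRelativeEntropy b σ ρ S₂ ∧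
      S₁ + S₂ = trElem b ((ρ - σ) * X) := by
  obtain ⟨M, hM⟩ := hnear.exists_norm_cfc_negLogTrunc_sub_le hρ.1 hσ.1
  have hweak : ∀ x, Tendsto (fun n => ⟪x, (cfc (negLogTrunc n) σ - cfc (negLogTrunc n) ρ) x⟫_ℂ)
      atTop (nhds ⟪x, X x⟫_ℂ) := fun x =>
    hσX.tendsto_inner_cfc_negLogTrunc_sub hρ.1 hσ.1 hρ.2.1 hσ.2.1 hM x x
  have hM' : ∀ n, ‖cfc (negLogTrunc n) ρ - cfc (negLogTrunc n) σ‖ ≤ M := fun n =>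
    (norm_sub_rev _ _).trans_le (hM n)
  have hweak' : ∀ x, Tendsto (fun n => ⟪x, (cfc (negLogTrunc n) ρ - cfc (negLogTrunc n) σ) x⟫_ℂ)
      atTop (nhds ⟪x, (-X) x⟫_ℂ) := fun x => by
    simpa only [← inner_neg_right, ← neg_apply, neg_sub] using (hweak x).neg
  refine ⟨trElem b (ρ * X), trElem b (σ * -X), hρ.tendsto_trElem_mul hM hweak,
    hσ.tendsto_trElem_mul hM' hweak', ?_⟩
  rw [hρ.trElem_mul_add_trElem_mul hσ, mul_neg, ← sub_eq_add_neg, ← sub_mul]
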